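/- arXiv:1503.06778 — 2 statements merged into one kernel-verified Lean document; each statement's English description precedes it below -/
import Mathlib

section
/- Counterexample, testing condition: let 1 ≤ q < p < ∞, μ = Lebesgue measure on [0,1), ν = the Cantor measure, and α_I = (2/3)^{n/p} if I is a tri-adic interval of length 3^{-n} contained in C_n, α_I = 0 otherwise. Then there is a constant K depending only on p, q such that for every tri-adic interval J that is a connected component of C_n, ∫_J (Σ_{tri-adic I ⊆ J} α_I^q · 1_I)^{p/q} dν ≤ K · (2/3)^n · ν(J) = K · μ(J). -/
open MeasureTheory ENNReal NNReal Set Filter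
open scoped Classical

/-- The tri-adic interval `[k·3⁻ⁿ, (k+1)·3⁻ⁿ)`. -/
noncomputable def triadic (n k : ℕ) : Set ℝ :=
  Ico ((k : ℝ) * 3 ^ (-(n : ℤ))) (((k : ℝ) + 1) * 3 ^ (-(n : ℤ)))

/-- The left endpoint `∑_j ε_j 3^{-(j+1)}` (with digits `ε_j ∈ {0,2}`) of a component of
the `n`-th step `C_n` of the 1/3-Cantor set construction. -/
noncomputable def cantorBase {n : ℕ} (ε : Fin n → Bool) : ℝ :=
  ∑ j : Fin n, (if ε j then 2 else 0) * (3 : ℝ) ^ (-((j : ℕ) : ℤ) - 1)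

/-- The connected component of `C_n` with digits `ε`. -/
noncomputable def cantorPiece {n : ℕ} (ε : Fin n → Bool) : Set ℝ :=
  Ico (cantorBase ε) (cantorBase ε + 3 ^ (-(n : ℤ)))

/-- The `n`-th step `C_n` of the 1/3-Cantor set construction: `C_0 = [0,1)`,
`C_1 = [0,1/3) ∪ [2/3,1)`, etc. -/
noncomputable def cantorN (n : ℕ) : Set ℝ := ⋃ ε : Fin n → Bool, cantorPiece ε

/-- The 1/3-Cantor set (made of half-open intervals): `C = ⋂_n C_n`. -/
noncomputable def cexCantorSet : Set ℝ := ⋂ n, cantorN n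

/-- The middle-third gap of the component of `C_m` with digits `ε`: a maximal tri-adic
interval of `[0,1) \ C` of length `3^{-(m+1)}`. -/
noncomputable def gapPiece {m : ℕ} (ε : Fin m → Bool) : Set ℝ :=
  Ico (cantorBase ε + 3 ^ (-(m + 1 : ℤ))) (cantorBase ε + 2 * 3 ^ (-(m + 1 : ℤ)))

/-- The coefficients of the counterexample: `α_I = (2/3)^{n/p}` if `I` is a tri-adic
interval of length `3⁻ⁿ` contained in `C_n`, and `α_I = 0` otherwise. -/
noncomputable def cexAlpha (p : ℝ) (n k : ℕ) : ℝ≥0∞ :=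
  if triadic n k ⊆ cantorN n then ENNReal.ofReal ((2 / 3 : ℝ) ^ ((n : ℝ) / p)) else 0

/-- The function of the counterexample: `f = (3/2)^{m/p} · m^{-r}` on each maximal
tri-adic gap interval of `[0,1) \ C` of length `3^{-m}`, and `f = 0` on `C`. -/
noncomputable def cexF (p r : ℝ) : ℝ → ℝ≥0∞ := fun x =>
  ∑' s : Σ m : ℕ, Fin m → Bool,
    (gapPiece s.2).indicator
      (fun _ => ENNReal.ofReal ((3 / 2 : ℝ) ^ (((s.1 : ℝ) + 1) / p) *
        ((s.1 : ℝ) + 1) ^ (-r))) x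

/-- The averaging operator `E_I^μ f = (μ(I)⁻¹ ∫_I f dμ) · 1_I`. -/
noncomputable def avgOp (μ : Measure ℝ) (I : Set ℝ) (f : ℝ → ℝ≥0∞) : ℝ → ℝ≥0∞ :=
  I.indicator fun _ => (∫⁻ y in I, f y ∂μ) / μ I

/-- Lebesgue measure restricted to `[0,1)`. -/
noncomputable def cexMu : Measure ℝ := volume.restrict (Ico (0 : ℝ) 1)

/-!
At each generation `m` a point lies in at most one tri-adic interval, and tri-adic intervals inside
a set of measure at most `3⁻ⁿ` have generation `m ≥ n`. As `α_I ^ q ≤ cᵐ` with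
`c = (2/3) ^ (q/p) < 1`, the inner sum is pointwise at most the geometric tail `cⁿ / (1 - c)`, whose
`p/q`-th power is `(1 - c) ^ (-p/q) * (2/3)ⁿ`.
-/

/-- The localized sum `∑_{I ⊆ J} a_I 1_I` over tri-adic intervals, where `a m k` is the coefficient
of `triadic m k`. -/
noncomputable def triadicSum (a : ℕ → ℕ → ℝ≥0∞) (J : Set ℝ) (x : ℝ) : ℝ≥0∞ :=
  ∑' mk : ℕ × ℕ, if triadic mk.1 mk.2 ⊆ J then
    a mk.1 mk.2 * (triadic mk.1 mk.2).indicator 1 x else 0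

theorem cantorBase_nonneg {n : ℕ} (ε : Fin n → Bool) : 0 ≤ cantorBase ε :=
  Finset.sum_nonneg fun j _ => by split_ifs <;> positivity

theorem cantorBase_succ {n : ℕ} (ε : Fin (n + 1) → Bool) :
    cantorBase ε =
      cantorBase (Fin.init ε) + (if ε (Fin.last n) then 2 else 0) * 3 ^ (-(n : ℤ) - 1) :=
  Fin.sum_univ_castSucc _

theorem cantorBase_add_le_one {n : ℕ} (ε : Fin n → Bool) : cantorBase ε + 3 ^ (-(n : ℤ)) ≤ 1 := by
  induction n with
  | zero => simp [cantorBase]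
  | succ n ih =>
    have parent_le := ih (Fin.init ε)
    have length_third : (3 : ℝ) ^ (-(n : ℤ) - 1) = 3 ^ (-(n : ℤ)) / 3 := by
      rw [zpow_sub_one₀ three_ne_zero, div_eq_mul_inv]
    have length_pos : (0 : ℝ) < 3 ^ (-(n : ℤ)) := by positivity
    rw [cantorBase_succ, Nat.cast_succ, neg_add', length_third]
    split_ifs <;> linarith

theorem cantorPiece_subset_Ico {n : ℕ} (ε : Fin n → Bool) : cantorPiece ε ⊆ Ico 0 1 :=
  Ico_subset_Ico (cantorBase_nonneg ε) (cantorBase_add_le_one ε)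

theorem ofReal_three_zpow_neg (n : ℕ) :
    ENNReal.ofReal (3 ^ (-(n : ℤ))) = (3 : ℝ≥0∞)⁻¹ ^ n := by
  rw [zpow_neg, zpow_natCast, ← inv_pow, ENNReal.ofReal_pow (by positivity),
    ENNReal.ofReal_inv_of_pos three_pos, ENNReal.ofReal_ofNat]

theorem volume_cantorPiece {n : ℕ} (ε : Fin n → Bool) :
    volume (cantorPiece ε) = (3 : ℝ≥0∞)⁻¹ ^ n := by
  rw [cantorPiece, Real.volume_Ico, add_sub_cancel_left, ofReal_three_zpow_neg]

theorem cexMu_cantorPiece {n : ℕ} (ε : Fin n → Bool) :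
    cexMu (cantorPiece ε) = (3 : ℝ≥0∞)⁻¹ ^ n := by
  rw [cexMu, Measure.restrict_eq_self _ (cantorPiece_subset_Ico ε), volume_cantorPiece]

theorem volume_triadic (n k : ℕ) : volume (triadic n k) = (3 : ℝ≥0∞)⁻¹ ^ n := by
  rw [triadic, Real.volume_Ico, ← sub_mul, add_sub_cancel_left, one_mul, ofReal_three_zpow_neg]

theorem le_of_triadic_subset {n m k : ℕ} {J : Set ℝ} (hJ : volume J ≤ (3 : ℝ≥0∞)⁻¹ ^ n)
    (hsub : triadic m k ⊆ J) : n ≤ m := by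
  have hpow : (3 : ℝ≥0∞)⁻¹ ^ m ≤ 3⁻¹ ^ n := volume_triadic m k ▸ (measure_mono hsub).trans hJ
  rw [← ENNReal.inv_pow, ← ENNReal.inv_pow, ENNReal.inv_le_inv] at hpow
  exact (pow_le_pow_iff_right₀ (by norm_num)).1 (by exact_mod_cast hpow : (3 : ℕ) ^ n ≤ 3 ^ m)

theorem eq_floor_of_mem_triadic {n k : ℕ} {x : ℝ} (hx : x ∈ triadic n k) :
    k = ⌊x * 3 ^ n⌋₊ := by
  obtain ⟨hle, hlt⟩ := hx
  rw [zpow_neg, zpow_natCast, ← div_eq_mul_inv] at hle hlt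
  rw [div_le_iff₀ (by positivity)] at hle
  rw [lt_div_iff₀ (by positivity)] at hlt
  exact ((Nat.floor_eq_iff (k.cast_nonneg.trans hle)).2 ⟨hle, hlt⟩).symm

theorem tsum_mul_indicator_triadic_le {m : ℕ} {a : ℕ → ℝ≥0∞} {b : ℝ≥0∞} (ha : ∀ k, a k ≤ b)
    (x : ℝ) : ∑' k, a k * (triadic m k).indicator 1 x ≤ b := by
  rw [tsum_eq_single ⌊x * 3 ^ m⌋₊ fun k hk => by
    rw [indicator_of_notMem fun hx => hk (eq_floor_of_mem_triadic hx), mul_zero]]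
  exact mul_le_of_le_of_le_one (ha _) (indicator_le_self' (fun _ _ => zero_le) x)

theorem tsum_geometric_Ici (c : ℝ≥0∞) (n : ℕ) :
    ∑' m, (if n ≤ m then c ^ m else 0) = c ^ n * (1 - c)⁻¹ := by
  have head_eq_zero : ∑ m ∈ Finset.range n, (if n ≤ m then c ^ m else 0) = 0 :=
    Finset.sum_eq_zero fun m hm => if_neg (Finset.mem_range.1 hm).not_ge
  rw [← ENNReal.summable.sum_add_tsum_nat_add' (k := n), head_eq_zero, zero_add]
  simp only [Nat.le_add_left, if_true, pow_add]
  rw [ENNReal.tsum_mul_right, ENNReal.tsum_geometric, mul_comm]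

section GeometricCoefficients

variable {a : ℕ → ℕ → ℝ≥0∞} {c : ℝ≥0∞} {n : ℕ} {J : Set ℝ}

theorem triadicSum_le (ha : ∀ m k, a m k ≤ c ^ m) (hJ : volume J ≤ (3 : ℝ≥0∞)⁻¹ ^ n) (x : ℝ) :
    triadicSum a J x ≤ c ^ n * (1 - c)⁻¹ := by
  have coeff_le (m k : ℕ) :
      (if triadic m k ⊆ J then a m k else 0) ≤ if n ≤ m then c ^ m else 0 := by
    by_cases hsub : triadic m k ⊆ J
    · rw [if_pos hsub, if_pos (le_of_triadic_subset hJ hsub)]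
      exact ha m k
    · rw [if_neg hsub]
      exact zero_le
  calc triadicSum a J x
      = ∑' (m) (k), (if triadic m k ⊆ J then a m k else 0) * (triadic m k).indicator 1 x := by
        simp only [triadicSum, ite_mul, zero_mul]
        exact ENNReal.tsum_prod
          (f := fun m k => if triadic m k ⊆ J then a m k * (triadic m k).indicator 1 x else 0)
    _ ≤ ∑' m, (if n ≤ m then c ^ m else 0) :=
        ENNReal.tsum_le_tsum fun m => tsum_mul_indicator_triadic_le (coeff_le m) x
    _ = c ^ n * (1 - c)⁻¹ := tsum_geometric_Ici c n

theorem setLIntegral_triadicSum_rpow_le {s : ℝ} (hs : 0 ≤ s) (ha : ∀ m k, a m k ≤ c ^ m)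
    (hJ : volume J ≤ (3 : ℝ≥0∞)⁻¹ ^ n) (ν : Measure ℝ) :
    ∫⁻ x in J, triadicSum a J x ^ s ∂ν ≤ (1 - c)⁻¹ ^ s * ((c ^ s) ^ n * ν J) :=
  calc ∫⁻ x in J, triadicSum a J x ^ s ∂ν
      ≤ ∫⁻ _ in J, (c ^ n * (1 - c)⁻¹) ^ s ∂ν :=
        lintegral_mono fun x => ENNReal.rpow_le_rpow (triadicSum_le ha hJ x) hs
    _ = (c ^ n * (1 - c)⁻¹) ^ s * ν J := setLIntegral_const _ _
    _ = (1 - c)⁻¹ ^ s * ((c ^ s) ^ n * ν J) := by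
        rw [ENNReal.mul_rpow_of_nonneg _ _ hs, ← ENNReal.rpow_natCast_mul, mul_comm (n : ℝ),
          ENNReal.rpow_mul_natCast, mul_comm ((c ^ s) ^ n), mul_assoc]

end GeometricCoefficients

theorem cexAlpha_rpow_le (p : ℝ) {q : ℝ} (hq : 0 < q) (m k : ℕ) :
    cexAlpha p m k ^ q ≤ ((2 / 3 : ℝ≥0∞) ^ (q / p)) ^ m := by
  unfold cexAlpha
  split_ifs
  · have ofReal_two_thirds : ENNReal.ofReal (2 / 3) = 2 / 3 := by
      rw [ENNReal.ofReal_div_of_pos three_pos, ENNReal.ofReal_ofNat, ENNReal.ofReal_ofNat]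
    rw [← ENNReal.ofReal_rpow_of_pos (by norm_num), ofReal_two_thirds, ← ENNReal.rpow_natCast,
      ← ENNReal.rpow_mul, ← ENNReal.rpow_mul, div_mul_comm]
  · rw [ENNReal.zero_rpow_of_pos hq]
    exact zero_le

theorem two_thirds_pow_mul_inv_two_pow (n : ℕ) :
    (2 / 3 : ℝ≥0∞) ^ n * 2⁻¹ ^ n = 3⁻¹ ^ n := by
  rw [← mul_pow, div_eq_mul_inv, mul_right_comm,
    ENNReal.mul_inv_cancel two_ne_zero ENNReal.ofNat_ne_top, one_mul]

theorem counterexample_testing_condition_general {p q : ℝ} (hp : 0 < p) (hq : 0 < q) :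
    ∃ K : ℝ≥0∞, 0 < K ∧ K < ∞ ∧
      ∀ ν : Measure ℝ,
        (∀ (n : ℕ) (ε : Fin n → Bool), ν (cantorPiece ε) = (2 : ℝ≥0∞)⁻¹ ^ n) →
        ∀ (n : ℕ) (ε : Fin n → Bool),
          (∫⁻ x in cantorPiece ε,
            triadicSum (fun m k => cexAlpha p m k ^ q) (cantorPiece ε) x ^ (p / q) ∂ν
            ≤ K * ((2 / 3 : ℝ≥0∞) ^ n * ν (cantorPiece ε))) ∧
          (2 / 3 : ℝ≥0∞) ^ n * ν (cantorPiece ε) = cexMu (cantorPiece ε) := by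
  set c : ℝ≥0∞ := (2 / 3) ^ (q / p) with hc
  have two_thirds_lt_one : (2 / 3 : ℝ≥0∞) < 1 := ENNReal.div_lt_of_lt_mul (by norm_num)
  have c_lt_one : c < 1 := ENNReal.rpow_lt_one two_thirds_lt_one (by positivity)
  have c_rpow : c ^ (p / q) = 2 / 3 := by
    rw [hc, ← ENNReal.rpow_mul, div_mul_div_cancel₀ hp.ne', div_self hq.ne', ENNReal.rpow_one]
  have factor_pos : 0 < (1 - c)⁻¹ := ENNReal.inv_pos.2 (ENNReal.sub_ne_top ENNReal.one_ne_top)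
  have factor_ne_top : (1 - c)⁻¹ ≠ ∞ := ENNReal.inv_ne_top.2 (tsub_pos_of_lt c_lt_one).ne'
  refine ⟨(1 - c)⁻¹ ^ (p / q), ENNReal.rpow_pos factor_pos factor_ne_top,
    ENNReal.rpow_lt_top_of_nonneg (by positivity) factor_ne_top, fun ν hν n ε => ⟨?_, ?_⟩⟩
  · rw [← c_rpow]
    exact setLIntegral_triadicSum_rpow_le (div_pos hp hq).le (cexAlpha_rpow_le p hq)
      (volume_cantorPiece ε).le ν
  · rw [hν, cexMu_cantorPiece, two_thirds_pow_mul_inv_two_pow]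

/-- **counterexample: the testing condition holds.** With `μ` Lebesgue on
`[0,1)`, `ν` the Cantor measure and `α_I = (2/3)^{n/p}` on components of `C_n`, there is
`K = K(p,q)` such that for every component `J` of `C_n`,
`∫_J (∑_{I ⊆ J} α_I^q 1_I)^{p/q} dν ≤ K (2/3)ⁿ ν(J) = K μ(J)`. -/
theorem counterexample_testing_condition (p q : ℝ) (hq : 1 ≤ q) (hqp : q < p) :
    ∃ K : ℝ≥0∞, 0 < K ∧ K < ∞ ∧
      ∀ ν : Measure ℝ,
        (∀ (n : ℕ) (ε : Fin n → Bool), ν (cantorPiece ε) = (2 : ℝ≥0∞)⁻¹ ^ n) →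
        ν (Ico (0 : ℝ) 1)ᶜ = 0 →
        ∀ (n : ℕ) (ε : Fin n → Bool),
          (∫⁻ x in cantorPiece ε,
            (∑' mj : ℕ × ℕ, if triadic mj.1 mj.2 ⊆ cantorPiece ε then
                cexAlpha p mj.1 mj.2 ^ q * (triadic mj.1 mj.2).indicator 1 x
              else 0) ^ (p / q) ∂ν
            ≤ K * ((2 / 3 : ℝ≥0∞) ^ n * ν (cantorPiece ε))) ∧
          (2 / 3 : ℝ≥0∞) ^ n * ν (cantorPiece ε) = cexMu (cantorPiece ε) := by
  have hq_pos : 0 < q := one_pos.trans_le hq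
  obtain ⟨K, hK_pos, hK_lt_top, hK⟩ :=
    counterexample_testing_condition_general (hq_pos.trans hqp) hq_pos
  exact ⟨K, hK_pos, hK_lt_top, fun ν hν _ => hK ν hν⟩
end

section
/- Counterexample, lower bound on averages: let p > 0, r > 0, and define f on [0,1) by f = (3/2)^{m/p} · m^{-r} on each maximal tri-adic interval of length 3^{-m} contained in [0,1) \ C, f = 0 on C. Then for every tri-adic interval I of length 3^{-n} that is a connected component of C_n, the Lebesgue average satisfies 3^n ∫_I f dx ≥ (1/3) · (3/2)^{(n+1)/p} · (n+1)^{-r}. -/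
open MeasureTheory ENNReal NNReal Set Filter
open scoped Classical

/-- The function with value `w ⟨m, ε⟩` on the gap of the component of `C_m` with digits `ε`, and
`0` off all gaps; the gaps are disjoint, so the sum has at most one nonzero term. The index `m` is
that of `C_m`, while the gap has length `3^{-(m+1)}`: `cexF p r` is the case
`w ⟨m, ε⟩ = (3/2)^{(m+1)/p} (m+1)^{-r}`. -/
noncomputable def gapFunction (w : (Σ m : ℕ, Fin m → Bool) → ℝ≥0∞) (x : ℝ) : ℝ≥0∞ :=
  ∑' s : Σ m : ℕ, Fin m → Bool, (gapPiece s.2).indicator (fun _ => w s) x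

section GapPiece

variable {n : ℕ} (ε : Fin n → Bool)

lemma gapPiece_subset_cantorPiece : gapPiece ε ⊆ cantorPiece ε := by
  have h_third : (3 : ℝ) ^ (-(n : ℤ)) = 3 * 3 ^ (-(n + 1 : ℤ)) := by
    rw [← zpow_one_add₀ three_ne_zero]
    congr 1
    ring
  have h_pos : (0 : ℝ) < 3 ^ (-(n + 1 : ℤ)) := by positivity
  unfold gapPiece cantorPiece
  apply Ico_subset_Ico <;> linarith

lemma measurableSet_gapPiece : MeasurableSet (gapPiece ε) :=
  measurableSet_Ico

lemma volume_gapPiece : volume (gapPiece ε) = (3 ^ (n + 1))⁻¹ := by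
  have h_length : cantorBase ε + 2 * 3 ^ (-(n + 1 : ℤ)) - (cantorBase ε + 3 ^ (-(n + 1 : ℤ)))
      = ((3 : ℝ) ^ (n + 1))⁻¹ := by
    rw [← zpow_natCast, ← zpow_neg]
    push_cast
    ring
  rw [gapPiece, Real.volume_Ico, h_length, ofReal_inv_of_pos (by positivity),
    ofReal_pow zero_le_three, ofReal_ofNat]

variable (w : (Σ m : ℕ, Fin m → Bool) → ℝ≥0∞)

lemma le_gapFunction_of_mem_gapPiece {x : ℝ} (hx : x ∈ gapPiece ε) :
    w ⟨n, ε⟩ ≤ gapFunction w x :=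
  calc w ⟨n, ε⟩ = (gapPiece ε).indicator (fun _ => w ⟨n, ε⟩) x :=
        (indicator_of_mem hx fun _ => w ⟨n, ε⟩).symm
    _ ≤ gapFunction w x :=
        ENNReal.le_tsum (f := fun s : Σ m : ℕ, Fin m → Bool =>
          (gapPiece s.2).indicator (fun _ => w s) x) ⟨n, ε⟩

lemma mul_volume_gapPiece_le_setLIntegral_gapFunction :
    w ⟨n, ε⟩ * volume (gapPiece ε) ≤ ∫⁻ x in cantorPiece ε, gapFunction w x :=
  calc w ⟨n, ε⟩ * volume (gapPiece ε) = ∫⁻ _ in gapPiece ε, w ⟨n, ε⟩ :=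
        (setLIntegral_const _ _).symm
    _ ≤ ∫⁻ x in gapPiece ε, gapFunction w x :=
        setLIntegral_mono' (measurableSet_gapPiece ε) fun _ =>
          le_gapFunction_of_mem_gapPiece ε w
    _ ≤ ∫⁻ x in cantorPiece ε, gapFunction w x :=
        lintegral_mono_set (gapPiece_subset_cantorPiece ε)

end GapPiece

theorem counterexample_average_lower_bound_general
    (w : (Σ m : ℕ, Fin m → Bool) → ℝ≥0∞) (n : ℕ) (ε : Fin n → Bool) :
    3⁻¹ * w ⟨n, ε⟩ ≤ 3 ^ n * ∫⁻ x in cantorPiece ε, gapFunction w x := by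
  have h_proportion : 3 ^ n * volume (gapPiece ε) = 3⁻¹ := by
    rw [volume_gapPiece, pow_succ, ENNReal.mul_inv (by simp) (by simp), ← mul_assoc,
      ENNReal.mul_inv_cancel (by simp) (by simp), one_mul]
  calc 3⁻¹ * w ⟨n, ε⟩ = 3 ^ n * (w ⟨n, ε⟩ * volume (gapPiece ε)) := by
        rw [← h_proportion]
        ring
    _ ≤ 3 ^ n * ∫⁻ x in cantorPiece ε, gapFunction w x := by
        gcongr
        exact mul_volume_gapPiece_le_setLIntegral_gapFunction ε w

/-- **counterexample: lower bound on averages.** For `p, r > 0` and every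
tri-adic interval `I` that is a connected component of `C_n`, the Lebesgue average of the
gap function `f` satisfies `3ⁿ ∫_I f dx ≥ (1/3) (3/2)^{(n+1)/p} (n+1)^{-r}`. -/
theorem counterexample_average_lower_bound (p r : ℝ) (hp : 0 < p) (hr : 0 < r)
    (n : ℕ) (ε : Fin n → Bool) :
    ENNReal.ofReal ((1 / 3 : ℝ) * (3 / 2 : ℝ) ^ (((n : ℝ) + 1) / p) *
        ((n : ℝ) + 1) ^ (-r))
      ≤ ENNReal.ofReal ((3 : ℝ) ^ (n : ℕ)) * ∫⁻ x in cantorPiece ε, cexF p r x ∂volume := by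
  rw [mul_assoc, ofReal_mul (by norm_num), one_div, ofReal_inv_of_pos three_pos,
    ofReal_pow zero_le_three, ofReal_ofNat]
  exact counterexample_average_lower_bound_general _ n ε
end
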